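/- arXiv:1812.11370 — 2 statements merged into one kernel-verified Lean document; each statement's English description precedes it below -/
import Mathlib

section
/- Let a ∈ ℤ, let α > 0 with n-1 < α < n for some positive integer n, let β > 0, let m be a natural number with m < β, and let λ be a real number with |λ| < 1. Then for every k ∈ ℕ_{a+1}, the m-th backward difference of the discrete Mittag–Leffler function satisfies ∇^m F_{α,β}(λ,k,a) = F_{α,β-m}(λ,k,a). -/
/-!
Put `x = jα + β > 0` and `r = k - a - 1`.  The coefficient of `λ^j` in `F_{α,β}(λ,k,a)` is
`Γ(x + r) / (Γ(r + 1) Γ(x)) = x (x + 1) ⋯ (x + r - 1) / r!`, a polynomial `risingBinom r` in `x`.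
These polynomials satisfy the Pascal rule
`risingBinom (r + 1) x - risingBinom r x = risingBinom (r + 1) (x - 1)` for every real `x`, so a
backward difference in `k` lowers `β` by one, term by term; the value `0` at `k ≤ a` makes this hold
at `k = a + 1` as well.  Splitting the series is justified because `∑ λ^j p(j)` converges for every
polynomial `p` when `|λ| < 1`.  The polynomial form `polyML` makes sense for all real `β`, so the
difference rule iterates without sign conditions; positivity of `β` and `β - m` is only needed to
identify `polyML` with `discML`.
-/

/-- The rising function `p^{q̄} = Γ(p+q)/Γ(p)`. -/
noncomputable def rise (p : ℤ) (q : ℝ) : ℝ :=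
  Real.Gamma ((p : ℝ) + q) / Real.Gamma (p : ℝ)

/-- The discrete Mittag–Leffler function
`F_{α,β}(λ,k,a) = ∑_{j=0}^∞ λ^j (k-a)^{\overline{jα+β-1}}/Γ(jα+β)` for `k ≥ a+1`,
with the convention that it vanishes for `k ≤ a`. -/
noncomputable def discML (α β lam : ℝ) (k a : ℤ) : ℝ :=
  if a + 1 ≤ k then
    ∑' j : ℕ, lam ^ j * rise (k - a) ((j : ℝ) * α + β - 1) / Real.Gamma ((j : ℝ) * α + β)
  else 0

/-- The `n`-th backward difference `∇ⁿ f(k) = ∑_{j=0}^n (-1)^j C(n,j) f(k-j)`. -/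
noncomputable def bdiff (n : ℕ) (f : ℤ → ℝ) (k : ℤ) : ℝ :=
  ∑ j ∈ Finset.range (n + 1), (-1 : ℝ) ^ j * (n.choose j : ℝ) * f (k - j)

open Polynomial

/-- The polynomial `x (x + 1) ⋯ (x + r - 1) / r!` evaluated at a real `x`. -/
noncomputable def risingBinom (r : ℕ) (x : ℝ) : ℝ :=
  (ascPochhammer ℝ r).eval x / (r.factorial : ℝ)

/-- The discrete Mittag–Leffler series with its Gamma quotients replaced by the polynomials
`risingBinom`; it agrees with `discML` for `α ≥ 0`, `β > 0` and is meaningful for every real `β`. -/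
noncomputable def polyML (α β lam : ℝ) (k a : ℤ) : ℝ :=
  if a + 1 ≤ k then
    ∑' j : ℕ, lam ^ j * risingBinom (k - a - 1).toNat ((j : ℝ) * α + β)
  else 0

lemma Gamma_add_nat_eq (r : ℕ) {x : ℝ} (hx : 0 < x) :
    Real.Gamma (x + r) = (ascPochhammer ℝ r).eval x * Real.Gamma x := by
  induction r with
  | zero => simp
  | succ r ih =>
    have h : x + r ≠ 0 := by positivity
    rw [ascPochhammer_succ_eval, Nat.cast_succ, ← add_assoc, Real.Gamma_add_one h, ih]
    ring

lemma rise_div_Gamma (r : ℕ) {x : ℝ} (hx : 0 < x) :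
    rise ((r : ℤ) + 1) (x - 1) / Real.Gamma x = risingBinom r x := by
  have hG := (Real.Gamma_pos_of_pos hx).ne'
  have e : (((r : ℤ) + 1 : ℤ) : ℝ) + (x - 1) = x + r := by push_cast; ring
  have e' : (((r : ℤ) + 1 : ℤ) : ℝ) = r + 1 := by push_cast; ring
  rw [rise, risingBinom, e, e', Gamma_add_nat_eq r hx, Real.Gamma_nat_eq_factorial]
  field_simp

lemma discML_eq_polyML {α β : ℝ} (hα : 0 ≤ α) (hβ : 0 < β) (lam : ℝ) (k a : ℤ) :
    discML α β lam k a = polyML α β lam k a := by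
  unfold discML polyML
  split_ifs with h
  · refine tsum_congr fun j => ?_
    have hx : 0 < (j : ℝ) * α + β := by positivity
    have e : k - a = ((k - a - 1).toNat : ℤ) + 1 := by omega
    rw [mul_div_assoc, ← rise_div_Gamma _ hx, ← e]
  · rfl

/-- Pascal's rule for `risingBinom`. -/
lemma risingBinom_succ_sub (r : ℕ) (x : ℝ) :
    risingBinom (r + 1) x - risingBinom r x = risingBinom (r + 1) (x - 1) := by
  have h1 := ascPochhammer_succ_eval (S := ℝ) r x
  have h2 : (ascPochhammer ℝ (r + 1)).eval (x - 1) = (x - 1) * (ascPochhammer ℝ r).eval x := by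
    rw [ascPochhammer_succ_left]
    simp [eval_comp]
  unfold risingBinom
  rw [h1, h2, Nat.factorial_succ]
  have : (r.factorial : ℝ) ≠ 0 := by positivity
  push_cast
  field_simp
  ring

lemma summable_geometric_mul_poly {lam : ℝ} (hlam : |lam| < 1) (p : ℝ[X]) :
    Summable fun j : ℕ => lam ^ j * p.eval (j : ℝ) := by
  simp_rw [eval_eq_sum_range, Finset.mul_sum]
  refine summable_sum fun i _ => ?_
  have h := (summable_pow_mul_geometric_of_norm_lt_one i (r := lam) hlam).mul_left (p.coeff i)
  exact h.congr fun j => by ring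

lemma summable_risingBinom {lam : ℝ} (hlam : |lam| < 1) (α β : ℝ) (r : ℕ) :
    Summable fun j : ℕ => lam ^ j * risingBinom r ((j : ℝ) * α + β) := by
  have h := (summable_geometric_mul_poly hlam
    ((ascPochhammer ℝ r).comp (X * C α + C β))).div_const (r.factorial : ℝ)
  refine h.congr fun j => ?_
  simp only [risingBinom, eval_comp, eval_add, eval_mul, eval_X, eval_C, mul_div_assoc]

lemma polyML_sub {lam : ℝ} (hlam : |lam| < 1) (α β : ℝ) (k a : ℤ) :
    polyML α β lam k a - polyML α β lam (k - 1) a = polyML α (β - 1) lam k a := by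
  unfold polyML
  rcases lt_trichotomy k (a + 1) with h | h | h
  · rw [if_neg (by omega), if_neg (by omega), if_neg (by omega), sub_zero]
  · -- at `k = a + 1` every coefficient is `risingBinom 0 = 1`, independent of `β`
    have e : (k - a - 1).toNat = 0 := by omega
    rw [if_pos (by omega), if_neg (by omega), if_pos (by omega), e]
    simp [risingBinom]
  · obtain ⟨r, hr⟩ : ∃ r : ℕ, (k - a - 1).toNat = r + 1 := ⟨(k - a - 2).toNat, by omega⟩
    have hr' : (k - 1 - a - 1).toNat = r := by omega
    rw [if_pos (by omega), if_pos (by omega), if_pos (by omega), hr, hr',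
      ← (summable_risingBinom hlam α β (r + 1)).tsum_sub (summable_risingBinom hlam α β r)]
    refine tsum_congr fun j => ?_
    rw [← mul_sub, risingBinom_succ_sub, add_sub_assoc]

lemma bdiff_succ (m : ℕ) (f : ℤ → ℝ) (k : ℤ) :
    bdiff (m + 1) f k = bdiff m f k - bdiff m f (k - 1) := by
  unfold bdiff
  -- the extra top term carries the factor `m.choose (m + 1) = 0`
  have h : ∑ j ∈ Finset.range (m + 1), (-1 : ℝ) ^ j * (m.choose j : ℝ) * f (k - j) =
      ∑ j ∈ Finset.range (m + 1 + 1), (-1 : ℝ) ^ j * (m.choose j : ℝ) * f (k - j) := by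
    rw [Finset.sum_range_succ _ (m + 1)]
    simp
  rw [h, Finset.sum_range_succ' _ (m + 1), Finset.sum_range_succ' _ (m + 1),
    add_sub_right_comm, ← Finset.sum_sub_distrib]
  congr 1
  · refine Finset.sum_congr rfl fun j _ => ?_
    have e : k - ((j + 1 : ℕ) : ℤ) = k - 1 - j := by push_cast; ring
    rw [e, Nat.choose_succ_succ']
    push_cast
    ring
  · simp

lemma bdiff_polyML {lam : ℝ} (hlam : |lam| < 1) (α β : ℝ) (a : ℤ) (m : ℕ) (k : ℤ) :
    bdiff m (fun j => polyML α β lam j a) k = polyML α (β - m) lam k a := by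
  induction m generalizing k with
  | zero => simp [bdiff]
  | succ m ih =>
    rw [bdiff_succ, ih, ih, polyML_sub hlam, Nat.cast_succ, sub_sub]

/-- for `n-1 < α < n`, `β > 0`, `m ∈ ℕ` with `m < β` and `|λ| < 1`,
the `m`-th backward difference of the discrete Mittag–Leffler function satisfies
`∇^m F_{α,β}(λ,k,a) = F_{α,β-m}(λ,k,a)` for every `k ∈ ℕ_{a+1}`. -/
theorem bdiff_discML (a : ℤ) (n : ℕ) (hn : 0 < n) (α : ℝ)
    (hα1 : (n : ℝ) - 1 < α) (hα2 : α < n) (β : ℝ) (hβ : 0 < β)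
    (m : ℕ) (hm : (m : ℝ) < β) (lam : ℝ) (hlam : |lam| < 1)
    (k : ℤ) (hk : a + 1 ≤ k) :
    bdiff m (fun j => discML α β lam j a) k = discML α (β - m) lam k a := by
  have hα : 0 ≤ α := by
    have : (1 : ℝ) ≤ n := by exact_mod_cast hn
    linarith
  simp_rw [discML_eq_polyML hα hβ, discML_eq_polyML hα (sub_pos.mpr hm)]
  exact bdiff_polyML hlam α β a m k
end

section
/- Let a ∈ ℤ, α > 0, λ ∈ ℝ, and let y₀, u : ℕ_{a+1} → ℝ. Define a sequence of functions y_p : ℕ_{a+1} → ℝ, starting from y₀, by the recursion y_p(k) = y₀(k) + λ·ₐ∇ₖ^{-α} y_{p-1}(k) + ₐ∇ₖ^{-α} u(k) for p ≥ 1. Then for every p ≥ 1 and every k ∈ ℕ_{a+1} one has y_p(k) = ∑_{j=0}^{p} λ^j · ₐ∇ₖ^{-jα} y₀(k) + ∑_{j=0}^{p-1} λ^j · ₐ∇ₖ^{-(j+1)α} u(k), where ₐ∇ₖ^{-0} denotes the identity operator. -/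
/-!
With the convention that `ₐ∇ₖ^{-0}` is the identity, every fractional sum of order `γ ≥ 0` is the
convolution with the generalised multiset coefficients `Ring.multichoose γ j`, the Taylor
coefficients of `(1 - x)^{-γ}`: for `γ > 0` they equal `Γ(j+γ) / (Γ(γ) Γ(j+1))`, and for `γ = 0`
they are `1, 0, 0, …` (`nsum_eq_sum_multichoose`). The Chu–Vandermonde identity
(`multichoose_add`) then gives the semigroup law `ₐ∇ₖ^{-β} ₐ∇ₖ^{-γ} = ₐ∇ₖ^{-(β+γ)}`
(`nsum_nsum`). Since the fractional sum is linear and only sees values on `ℕ_{a+1}`, the closed form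
follows by induction on `p`, applying `ₐ∇ₖ^{-α}` term by term and shifting the index in
both sums. The induction starts at `p = 0`, where the formula reads `y₀ = ₐ∇ₖ^{-0} y₀`.
-/

/-- The `γ`-th nabla fractional sum
`ₐ∇ₖ^{-γ} f(k) = ∑_{j=0}^{k-a-1} (Γ(j+γ)/(Γ(γ)Γ(j+1))) f(k-j)` for `γ > 0`,
with the convention that the `0`-th fractional sum is the identity. -/
noncomputable def nsum (a : ℤ) (γ : ℝ) (f : ℤ → ℝ) (k : ℤ) : ℝ :=
  if γ = 0 then f k
  else ∑ j ∈ Finset.range (k - a).toNat,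
    (Real.Gamma ((j : ℝ) + γ) / (Real.Gamma γ * Real.Gamma ((j : ℝ) + 1))) * f (k - j)

open Finset in
/-- The Chu–Vandermonde identity for `multichoose`; it is the one for `choose` at `-r` and `-s`,
up to the sign `(-1) ^ n`. -/
lemma multichoose_add (r s : ℝ) (n : ℕ) :
    Ring.multichoose (r + s) n =
      ∑ ij ∈ antidiagonal n, Ring.multichoose r ij.1 * Ring.multichoose s ij.2 := by
  have key : ∀ (t : ℝ) (m : ℕ), Ring.multichoose t m = (-1) ^ m * Ring.choose (-t) m := by
    intro t m
    rw [Ring.choose_neg, ← Ring.multichoose_eq, Units.smul_def, zsmul_eq_mul,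
      Int.cast_negOnePow_natCast, ← mul_assoc, ← mul_pow]
    simp
  rw [key, neg_add, Ring.add_choose_eq n (Commute.all _ _), mul_sum]
  refine sum_congr rfl fun ij hij => ?_
  rw [key, key, ← mem_antidiagonal.mp hij, pow_add]
  ring

lemma Gamma_div_eq_multichoose {γ : ℝ} (hγ : 0 < γ) (j : ℕ) :
    Real.Gamma ((j : ℝ) + γ) / (Real.Gamma γ * Real.Gamma ((j : ℝ) + 1)) =
      Ring.multichoose γ j := by
  have hΓ : Real.Gamma γ ≠ 0 := (Real.Gamma_pos_of_pos hγ).ne'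
  have hasc : ∀ n : ℕ, Real.Gamma ((n : ℝ) + γ) = Real.Gamma γ * (ascPochhammer ℝ n).eval γ := by
    intro n
    induction n with
    | zero => simp
    | succ n ih =>
      have hne : (n : ℝ) + γ ≠ 0 := by positivity
      rw [Nat.cast_succ, add_right_comm, Real.Gamma_add_one hne, ih, ascPochhammer_succ_eval]
      ring
  have hfac := Ring.factorial_nsmul_multichoose_eq_ascPochhammer γ j
  rw [Polynomial.ascPochhammer_smeval_eq_eval, nsmul_eq_mul] at hfac
  have hj : (j.factorial : ℝ) ≠ 0 := by positivity
  rw [hasc, Real.Gamma_nat_eq_factorial, ← hfac]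
  field_simp

open Finset in
lemma nsum_eq_sum_multichoose {a k : ℤ} {γ : ℝ} (hγ : 0 ≤ γ) (hk : a + 1 ≤ k) (f : ℤ → ℝ) :
    nsum a γ f k = ∑ j ∈ range (k - a).toNat, Ring.multichoose γ j * f (k - j) := by
  unfold nsum
  split_ifs with h
  · subst h
    obtain ⟨n, hn⟩ : ∃ n, (k - a).toNat = n + 1 := ⟨(k - a).toNat - 1, by omega⟩
    rw [hn, sum_range_succ']
    simp [Ring.multichoose_zero_succ]
  · refine sum_congr rfl fun j _ => ?_
    rw [Gamma_div_eq_multichoose (lt_of_le_of_ne hγ (Ne.symm h))]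

/-- The fractional sum at a point of `ℕ_{a+1}` depends only on the values on `ℕ_{a+1}`. -/
lemma nsum_congr {a k : ℤ} {γ : ℝ} (hγ : 0 ≤ γ) (hk : a + 1 ≤ k) {f g : ℤ → ℝ}
    (hfg : ∀ l, a + 1 ≤ l → f l = g l) : nsum a γ f k = nsum a γ g k := by
  rw [nsum_eq_sum_multichoose hγ hk, nsum_eq_sum_multichoose hγ hk]
  refine Finset.sum_congr rfl fun j hj => ?_
  rw [hfg _ (by have := Finset.mem_range.mp hj; omega)]

lemma nsum_add {a k : ℤ} {γ : ℝ} (hγ : 0 ≤ γ) (hk : a + 1 ≤ k) (f g : ℤ → ℝ) :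
    nsum a γ (fun l => f l + g l) k = nsum a γ f k + nsum a γ g k := by
  simp only [nsum_eq_sum_multichoose hγ hk, mul_add, Finset.sum_add_distrib]

open Finset in
lemma nsum_sum_mul {a k : ℤ} {γ : ℝ} (hγ : 0 ≤ γ) (hk : a + 1 ≤ k) (n : ℕ) (c : ℕ → ℝ)
    (F : ℕ → ℤ → ℝ) :
    nsum a γ (fun l => ∑ i ∈ range n, c i * F i l) k =
      ∑ i ∈ range n, c i * nsum a γ (F i) k := by
  simp only [nsum_eq_sum_multichoose hγ hk, mul_sum]
  rw [sum_comm]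
  exact sum_congr rfl fun i _ => sum_congr rfl fun j _ => by ring

open Finset in
/-- The semigroup law for fractional sums. -/
lemma nsum_nsum {a k : ℤ} {β γ : ℝ} (hβ : 0 ≤ β) (hγ : 0 ≤ γ) (hk : a + 1 ≤ k) (f : ℤ → ℝ) :
    nsum a β (nsum a γ f) k = nsum a (β + γ) f k := by
  rw [nsum_eq_sum_multichoose hβ hk, nsum_eq_sum_multichoose (add_nonneg hβ hγ) hk]
  set n := (k - a).toNat with hn
  have hinner : ∀ i ∈ range n, Ring.multichoose β i * nsum a γ f (k - i) =
      ∑ j ∈ range (n - i),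
        Ring.multichoose β i * (Ring.multichoose γ j * f (k - (i + j : ℕ))) := by
    intro i hi
    have hi' := mem_range.mp hi
    rw [nsum_eq_sum_multichoose hγ (by omega), mul_sum,
      show (k - (i : ℤ) - a).toNat = n - i by omega]
    refine sum_congr rfl fun j _ => ?_
    rw [Nat.cast_add, sub_sub]
  rw [sum_congr rfl hinner, ← sum_range_diag_flip n fun i j =>
    Ring.multichoose β i * (Ring.multichoose γ j * f (k - (i + j : ℕ)))]
  refine sum_congr rfl fun m _ => ?_
  rw [multichoose_add, Nat.sum_antidiagonal_eq_sum_range_succ_mk, sum_mul]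
  refine sum_congr rfl fun i hi => ?_
  have hi' := mem_range.mp hi
  rw [show i + (m - i) = m by omega, mul_assoc]

/-- closed form of the Picard-type iteration
`y_p(k) = y₀(k) + λ·ₐ∇ₖ^{-α} y_{p-1}(k) + ₐ∇ₖ^{-α} u(k)`: for every `p ≥ 1` and
`k ∈ ℕ_{a+1}`,
`y_p(k) = ∑_{j=0}^{p} λ^j ₐ∇ₖ^{-jα} y₀(k) + ∑_{j=0}^{p-1} λ^j ₐ∇ₖ^{-(j+1)α} u(k)`. -/
theorem picard_closed_form (a : ℤ) (α : ℝ) (hα : 0 < α) (lam : ℝ)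
    (y₀ u : ℤ → ℝ) (y : ℕ → ℤ → ℝ) (hy0 : y 0 = y₀)
    (hrec : ∀ p : ℕ, 1 ≤ p → ∀ k : ℤ, a + 1 ≤ k →
      y p k = y₀ k + lam * nsum a α (y (p - 1)) k + nsum a α u k) :
    ∀ p : ℕ, 1 ≤ p → ∀ k : ℤ, a + 1 ≤ k →
      y p k = (∑ j ∈ Finset.range (p + 1), lam ^ j * nsum a ((j : ℝ) * α) y₀ k) +
        ∑ j ∈ Finset.range p, lam ^ j * nsum a (((j : ℝ) + 1) * α) u k := by
  have hα' := hα.le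
  suffices h : ∀ p : ℕ, ∀ k : ℤ, a + 1 ≤ k →
      y p k = (∑ j ∈ Finset.range (p + 1), lam ^ j * nsum a ((j : ℝ) * α) y₀ k) +
        ∑ j ∈ Finset.range p, lam ^ j * nsum a (((j : ℝ) + 1) * α) u k from
    fun p _ => h p
  intro p
  induction p with
  | zero => intro k _; simp [hy0, nsum]
  | succ p ih =>
    intro k hk
    rw [hrec (p + 1) (by omega) k hk, Nat.add_sub_cancel, nsum_congr hα' hk ih,
      nsum_add hα' hk, nsum_sum_mul hα' hk, nsum_sum_mul hα' hk]
    have h1 : ∀ j : ℕ, nsum a α (nsum a ((j : ℝ) * α) y₀) k =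
        nsum a (((j + 1 : ℕ) : ℝ) * α) y₀ k := by
      intro j
      rw [nsum_nsum hα' (by positivity) hk]
      congr 1
      push_cast
      ring
    have h2 : ∀ j : ℕ, nsum a α (nsum a (((j : ℝ) + 1) * α) u) k =
        nsum a ((((j + 1 : ℕ) : ℝ) + 1) * α) u k := by
      intro j
      rw [nsum_nsum hα' (by positivity) hk]
      congr 1
      push_cast
      ring
    simp only [h1, h2]
    -- Split off the `j = 0` terms, which are `y₀ k` and `nsum a α u k`.
    rw [Finset.sum_range_succ' _ (p + 1),
      Finset.sum_range_succ' (fun j : ℕ => lam ^ j * nsum a (((j : ℝ) + 1) * α) u k) p]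
    have h3 : nsum a (((0 : ℕ) : ℝ) * α) y₀ k = y₀ k := by simp [nsum]
    have h4 : nsum a ((((0 : ℕ) : ℝ) + 1) * α) u k = nsum a α u k := by simp
    rw [h3, h4, mul_add, Finset.mul_sum, Finset.mul_sum]
    simp only [pow_succ', mul_assoc, pow_zero, one_mul]
    ring
end
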